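/- Let A be a pca over ω. Then there exists a primitive recursion operator r ∈ A such that for all a, b ∈ A and all n ∈ ℕ: ra and rab are defined, rab0̄ ≃ a, and rab(n+1)‾ ≃ b(rabn̄)n̄. -/

import Mathlib

universe u

/-- A partial combinatory algebra: a set with at least two elements, a partial
binary application, and combinators `k`, `s` with `ka↓`, `sa↓`, `sab↓`,
`kab ≃ a` and `sabc ≃ ac(bc)`. -/
structure PCA (A : Type u) where
  app : A → A → Part A
  k : A
  s : A
  nontrivial : ∃ a b : A, a ≠ b
  k_def : ∀ a : A, (app k a).Dom
  s_def : ∀ a : A, (app s a).Dom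
  s_app_def : ∀ a b : A, ((app s a).bind fun x => app x b).Dom
  k_spec : ∀ a b : A, ((app k a).bind fun x => app x b) = Part.some a
  s_spec : ∀ a b c : A,
    (((app s a).bind fun x => app x b).bind fun x => app x c)
      = (app a c).bind fun u => (app b c).bind fun v => app u v

namespace PCA
variable {A : Type u} (P : PCA A)

/-- Apply a possibly undefined value to an element of `A` (left association). -/
def apl (x : Part A) (b : A) : Part A := x.bind fun a => P.app a b

end PCA

/-- A pca over ω: a pca with successor, predecessor and definition-by-cases
combinators for a system of numerals `n ↦ n̄`. -/
structure PCAOmega (A : Type u) extends PCA A where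
  succ : A
  pred : A
  d : A
  num : ℕ → A
  succ_spec : ∀ n : ℕ, app succ (num n) = Part.some (num (n + 1))
  pred_spec : ∀ n : ℕ, app pred (num (n + 1)) = Part.some (num n)
  d_eq : ∀ (n : ℕ) (a b : A),
    toPCA.apl (toPCA.apl (toPCA.apl (app d (num n)) (num n)) a) b = Part.some a
  d_ne : ∀ (n m : ℕ) (a b : A), n ≠ m →
    toPCA.apl (toPCA.apl (toPCA.apl (app d (num n)) (num m)) a) b = Part.some b

/-!
By combinatory completeness every function given by a term is represented by an element of the
algebra, and self-application then yields for each `f` some `g` with `g x ≃ f g x`. A recursion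
operator is a solution `r` of `r a ≃ h r a`, where `h r a b n` distinguishes the cases `n = 0̄` and
`n = (m + 1)‾`, returning `a` in the first and `b (r a b m̄) m̄` in the second. Since application is
strict, the combinator `d` must not choose between these two values, of which the second may be
undefined, but between the functions `fun _ => a` and `fun n => b (r a b (pred n)) (pred n)`; the
chosen one is then applied to `n`.
-/

theorem dom_iff_exists_eq_some {α : Type*} {x : Part α} : x.Dom ↔ ∃ a, x = Part.some a :=
  Part.dom_iff_mem.trans (exists_congr fun _ => Part.eq_some_iff.symm)

namespace PCA

variable {A : Type u}

/-- Applicative terms over `A` in the variables `x₀, …, xₙ₋₁`, the polynomials of combinatory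
algebra. Variables are de Bruijn levels: abstraction binds the last one, so that the variables of
an iterated abstraction are numbered from the outside in. -/
inductive Term (A : Type u) (n : ℕ) where
  | var : Fin n → Term A n
  | const : A → Term A n
  | app : Term A n → Term A n → Term A n

local infixl:100 "⬝" => Term.app

open Term

variable (P : PCA A) {n : ℕ}

/-- The value of a term under an assignment of its variables. Application is strict in both
arguments. -/
def eval (ρ : Fin n → A) : Term A n → Part A
  | var i => Part.some (ρ i)
  | const a => Part.some a
  | t ⬝ u => (eval ρ t).bind fun x => (eval ρ u).bind fun y => P.app x y

/-- Bracket abstraction `λ xₙ. t` of the last variable. -/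
def abs : Term A (n + 1) → Term A n
  | var i => Fin.lastCases (const P.s ⬝ const P.k ⬝ const P.k) (fun j => const P.k ⬝ var j) i
  | const a => const P.k ⬝ const a
  | t ⬝ u => const P.s ⬝ abs t ⬝ abs u

theorem apl_some (a b : A) : P.apl (Part.some a) b = P.app a b :=
  Part.bind_some a _

theorem exists_app_k_eq_some (a : A) :
    ∃ f, P.app P.k a = Part.some f ∧ ∀ b, P.app f b = Part.some a := by
  obtain ⟨f, hf⟩ := dom_iff_exists_eq_some.1 (P.k_def a)
  exact ⟨f, hf, fun b => by simpa only [hf, Part.bind_some] using P.k_spec a b⟩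

theorem exists_app_s_eq_some (a b : A) :
    ∃ f, P.apl (P.app P.s a) b = Part.some f ∧
      ∀ c, P.app f c = (P.app a c).bind fun u => (P.app b c).bind fun v => P.app u v := by
  obtain ⟨f, hf⟩ := dom_iff_exists_eq_some.1 (P.s_app_def a b)
  exact ⟨f, hf, fun c => by simpa only [hf, Part.bind_some] using P.s_spec a b c⟩

theorem exists_eval_abs_eq_some (t : Term A (n + 1)) (ρ : Fin n → A) :
    ∃ f, P.eval ρ (P.abs t) = Part.some f ∧
      ∀ a, P.app f a = P.eval (Fin.snoc ρ a : Fin (n + 1) → A) t := by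
  induction t with
  | var i =>
    cases i using Fin.lastCases with
    | last =>
      obtain ⟨f, hf, hf_app⟩ := P.exists_app_s_eq_some P.k P.k
      refine ⟨f, by simpa [abs, eval, apl] using hf, fun a => ?_⟩
      obtain ⟨g, hg, hg_app⟩ := P.exists_app_k_eq_some a
      simp [hf_app, hg, hg_app, eval]
    | cast j =>
      obtain ⟨f, hf, hf_app⟩ := P.exists_app_k_eq_some (ρ j)
      exact ⟨f, by simpa [abs, eval] using hf, fun a => by simp [hf_app, eval]⟩
  | const c =>
    obtain ⟨f, hf, hf_app⟩ := P.exists_app_k_eq_some c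
    exact ⟨f, by simpa [abs, eval] using hf, fun a => by simp [hf_app, eval]⟩
  | app t u iht ihu =>
    obtain ⟨x, hx, hx_app⟩ := iht
    obtain ⟨y, hy, hy_app⟩ := ihu
    obtain ⟨f, hf, hf_app⟩ := P.exists_app_s_eq_some x y
    exact ⟨f, by simpa [abs, eval, apl, hx, hy] using hf,
      fun a => by simp [hf_app, eval, hx_app, hy_app]⟩

theorem combinatory_completeness (t : Term A (n + 1)) :
    ∃ f, ∀ a : Fin n → A, ∃ g, (List.ofFn a).foldl P.apl (Part.some f) = Part.some g ∧
      ∀ b, P.app g b = P.eval (Fin.snoc a b : Fin (n + 1) → A) t := by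
  induction n with
  | zero =>
    obtain ⟨f, -, hf_app⟩ := P.exists_eval_abs_eq_some t Fin.elim0
    exact ⟨f, fun a => ⟨f, by simp, by rwa [Subsingleton.elim a Fin.elim0]⟩⟩
  | succ n ih =>
    obtain ⟨f, hf⟩ := ih (P.abs t)
    refine ⟨f, fun a => ?_⟩
    obtain ⟨g, hg, hg_app⟩ := hf (Fin.init a)
    obtain ⟨h, hh, hh_app⟩ := P.exists_eval_abs_eq_some t a
    refine ⟨h, ?_, hh_app⟩
    calc (List.ofFn a).foldl P.apl (Part.some f)
        = P.apl ((List.ofFn (Fin.init a)).foldl P.apl (Part.some f)) (a (Fin.last n)) := by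
          rw [List.ofFn_succ', List.concat_eq_append, List.foldl_concat]; rfl
      _ = P.app g (a (Fin.last n)) := by rw [hg, apl_some]
      _ = Part.some h := by rw [hg_app, Fin.snoc_init_self, hh]

theorem exists_app_eq_apl_app (f : A) : ∃ g, ∀ x, P.app g x = P.apl (P.app f g) x := by
  obtain ⟨w, hw⟩ := P.combinatory_completeness (const f ⬝ (var 0 ⬝ var 0) ⬝ var 1 : Term A 2)
  obtain ⟨g, hg, hg_app⟩ := hw ![w]
  replace hg : P.app w w = Part.some g := by simpa [apl] using hg
  exact ⟨g, fun x => by simp [hg_app, eval, hg, apl]⟩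

theorem exists_comp : ∃ c, ∀ f g, ∃ h, P.apl (P.app c f) g = Part.some h ∧
    ∀ x, P.app h x = (P.app g x).bind fun y => P.app f y := by
  obtain ⟨c, hc⟩ := P.combinatory_completeness (var 0 ⬝ (var 1 ⬝ var 2) : Term A 3)
  refine ⟨c, fun f g => ?_⟩
  obtain ⟨h, hh, hh_app⟩ := hc ![f, g]
  exact ⟨h, by simpa [apl] using hh, fun x => by simp [hh_app, eval]⟩

theorem exists_recursionStep : ∃ e, ∀ r a b, ∃ g,
    P.apl (P.apl (P.app e r) a) b = Part.some g ∧
      ∀ m, P.app g m =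
        P.apl ((P.apl (P.apl (P.app r a) b) m).bind fun v => P.app b v) m := by
  obtain ⟨e, he⟩ := P.combinatory_completeness
    (var 2 ⬝ (var 0 ⬝ var 1 ⬝ var 2 ⬝ var 3) ⬝ var 3 : Term A 4)
  refine ⟨e, fun r a b => ?_⟩
  obtain ⟨g, hg, hg_app⟩ := he ![r, a, b]
  exact ⟨g, by simpa [apl] using hg, fun m => by simp [hg_app, eval, apl]⟩

end PCA

namespace PCAOmega

open PCA PCA.Term

variable {A : Type u} (P : PCAOmega A)

local infixl:100 "⬝" => Term.app

theorem exists_natCases : ∃ c, ∀ x y, ∃ g, P.apl (P.app c x) y = Part.some g ∧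
    P.app g (P.num 0) = Part.some x ∧ ∀ n, P.app g (P.num (n + 1)) = P.app y (P.num n) := by
  obtain ⟨B, hB⟩ := P.exists_comp
  obtain ⟨c, hc⟩ := P.combinatory_completeness
    (const P.d ⬝ const (P.num 0) ⬝ var 2 ⬝ (const P.k ⬝ var 0)
      ⬝ (const B ⬝ var 1 ⬝ const P.pred) ⬝ var 2 : Term A 3)
  refine ⟨c, fun x y => ?_⟩
  obtain ⟨g, hg, hg_app⟩ := hc ![x, y]
  obtain ⟨f, hf, hf_app⟩ := P.exists_app_k_eq_some x
  obtain ⟨p, hp, hp_app⟩ := hB y P.pred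
  have hg_eq (m : A) : P.app g m =
      P.apl (P.apl (P.apl (P.apl (P.app P.d (P.num 0)) m) f) p) m := by
    simp only [apl] at hp
    simp [hg_app, eval, apl, hf, hp]
  refine ⟨g, by simpa [apl] using hg, ?_, fun n => ?_⟩
  · rw [hg_eq, P.d_eq, apl_some, hf_app]
  · rw [hg_eq, P.d_ne 0 (n + 1) f p n.succ_ne_zero.symm, apl_some, hp_app,
      P.pred_spec, Part.bind_some]

theorem exists_recursionBody : ∃ h, ∀ r a b, ∃ g,
    P.apl (P.apl (P.app h r) a) b = Part.some g ∧
      P.app g (P.num 0) = Part.some a ∧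
      ∀ n, P.app g (P.num (n + 1)) =
        P.apl ((P.apl (P.apl (P.app r a) b) (P.num n)).bind fun v => P.app b v) (P.num n) := by
  obtain ⟨c, hc⟩ := P.exists_natCases
  obtain ⟨e, he⟩ := P.exists_recursionStep
  obtain ⟨h, hh⟩ := P.combinatory_completeness
    (const c ⬝ var 1 ⬝ (const e ⬝ var 0 ⬝ var 1 ⬝ var 2) : Term A 3)
  refine ⟨h, fun r a b => ?_⟩
  obtain ⟨f, hf, hf_app⟩ := hh ![r, a]
  obtain ⟨step, hstep, hstep_app⟩ := he r a b
  obtain ⟨g, hg, hg_zero, hg_succ⟩ := hc a step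
  refine ⟨g, ?_, hg_zero, fun n => by rw [hg_succ, hstep_app]⟩
  replace hf : P.apl (P.app h r) a = Part.some f := by simpa [apl] using hf
  rw [hf, apl_some, hf_app]
  simp only [apl] at hstep hg
  simp [eval, hstep, hg]

end PCAOmega

/-- Every pca over ω has a **primitive recursion operator** `r`: for all
`a, b ∈ A` and `n ∈ ℕ`, `ra↓`, `rab↓`, `rab0̄ ≃ a` and
`rab(n+1)‾ ≃ b(rabn̄)n̄`. -/
theorem primitive_recursion_operator {A : Type u} (P : PCAOmega A) :
    ∃ r : A, ∀ (a b : A) (n : ℕ),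
      (P.app r a).Dom ∧
      (P.toPCA.apl (P.app r a) b).Dom ∧
      P.toPCA.apl (P.toPCA.apl (P.app r a) b) (P.num 0) = Part.some a ∧
      P.toPCA.apl (P.toPCA.apl (P.app r a) b) (P.num (n + 1))
        = P.toPCA.apl
            ((P.toPCA.apl (P.toPCA.apl (P.app r a) b) (P.num n)).bind fun v => P.app b v)
            (P.num n) := by
  obtain ⟨h, hh⟩ := P.exists_recursionBody
  obtain ⟨r, hr⟩ := P.exists_app_eq_apl_app h
  refine ⟨r, fun a b n => ?_⟩
  obtain ⟨g, hg, hg_zero, hg_succ⟩ := hh r a b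
  have hrab : P.apl (P.app r a) b = Part.some g := by rw [hr, hg]
  have hrab_dom : (P.apl (P.app r a) b).Dom := dom_iff_exists_eq_some.2 ⟨g, hrab⟩
  refine ⟨?_, ?_, ?_, ?_⟩
  · exact Part.Dom.of_bind hrab_dom
  · exact hrab_dom
  · rw [hrab, PCA.apl_some, hg_zero]
  · rw [← hg_succ, hrab, PCA.apl_some]
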